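/- Let r ≥ 1, d ≥ 0, and let M be a (d+1)-dimensional linear subspace of the space of skew-symmetric n×n complex matrices such that every nonzero matrix in M has rank 2r, where n ≥ 2r + d. Then there exists a (2r+d)×n complex matrix P of rank 2r+d such that for every nonzero A ∈ M the matrix P A Pᵀ has rank 2r. In particular, M can be isomorphically projected to a (d+1)-dimensional space of skew-symmetric (2r+d)×(2r+d) matrices of constant rank 2r. -/

import Mathlib

open Matrix

/-!
It suffices to lower `n` by one as long as `k + d < n`. Projecting along the line spanned by `v`
preserves the rank of `A` under `A ↦ Q A Qᵀ` as soon as `v` lies neither in the range of `A` nor in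
that of `Aᵀ`. Such a `v` exists for all `A ∈ M` at once by a dimension count: up to scaling,
the nonzero elements of `M` form finitely many affine families with `d` parameters, and a vector in
the range of a matrix of rank at most `k` is a combination of `k` of its columns, so all these
ranges together are covered by finitely many polynomial images of spaces of dimension at most
`k + d`. Each image lies in a hypersurface because more than `k + d` polynomials in `k + d`
variables are algebraically dependent, and over an infinite field hypersurfaces do not fill `Kⁿ`.
-/

variable {K ι σ l m n : Type*} [Field K]

section Hypersurface

/-- The set `S` is contained in an affine hypersurface, i.e. some nonzero polynomial vanishes on
it. The polynomial may be a nonzero constant, in which case `S` is empty. -/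
def LiesInHypersurface (S : Set (ι → K)) : Prop :=
  ∃ p : MvPolynomial ι K, p ≠ 0 ∧ ∀ v ∈ S, MvPolynomial.eval v p = 0

namespace LiesInHypersurface

lemma mono {S T : Set (ι → K)} (hT : LiesInHypersurface T) (hST : S ⊆ T) :
    LiesInHypersurface S :=
  let ⟨p, hp, hpT⟩ := hT
  ⟨p, hp, fun v hv => hpT v (hST hv)⟩

lemma singleton_zero [Nonempty ι] : LiesInHypersurface ({0} : Set (ι → K)) :=
  ⟨MvPolynomial.X (Classical.arbitrary ι), MvPolynomial.X_ne_zero _, by simp⟩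

lemma union {S T : Set (ι → K)} (hS : LiesInHypersurface S) (hT : LiesInHypersurface T) :
    LiesInHypersurface (S ∪ T) := by
  obtain ⟨p, hp, hpS⟩ := hS
  obtain ⟨q, hq, hqT⟩ := hT
  refine ⟨p * q, mul_ne_zero hp hq, ?_⟩
  rintro v (hv | hv)
  · rw [map_mul, hpS v hv, zero_mul]
  · rw [map_mul, hqT v hv, mul_zero]

lemma iUnion {κ : Type*} [Finite κ] {S : κ → Set (ι → K)} (hS : ∀ i, LiesInHypersurface (S i)) :
    LiesInHypersurface (⋃ i, S i) := by
  have := Fintype.ofFinite κ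
  choose p hp hpS using hS
  refine ⟨∏ i, p i, Finset.prod_ne_zero_iff.2 fun i _ => hp i, fun v hv => ?_⟩
  obtain ⟨i, hi⟩ := Set.mem_iUnion.1 hv
  rw [map_prod]
  exact Finset.prod_eq_zero (Finset.mem_univ i) (hpS i v hi)

lemma exists_notMem [Infinite K] {S : Set (ι → K)} (hS : LiesInHypersurface S) :
    ∃ v, v ∉ S := by
  obtain ⟨p, hp, hpS⟩ := hS
  by_contra! hall
  exact hp (MvPolynomial.funext fun v => by rw [hpS v (hall v), map_zero])

lemma range_eval [Fintype σ] [Fintype ι] (hcard : Fintype.card σ < Fintype.card ι)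
    (f : ι → MvPolynomial σ K) :
    LiesInHypersurface (Set.range fun (x : σ → K) i => MvPolynomial.eval x (f i)) := by
  have hdep : ¬ AlgebraicIndependent K f := fun hf => by
    have := hf.lift_cardinalMk_le_trdeg
    simp only [MvPolynomial.trdeg_of_isDomain, Cardinal.mk_fintype, Cardinal.lift_natCast,
      Nat.cast_le] at this
    omega
  rw [algebraicIndependent_iff] at hdep
  push Not at hdep
  obtain ⟨p, hpf, hp⟩ := hdep
  refine ⟨p, hp, ?_⟩
  rintro _ ⟨x, rfl⟩
  calc MvPolynomial.eval (fun i => MvPolynomial.eval x (f i)) p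
      = MvPolynomial.eval x (MvPolynomial.aeval f p) := by
        rw [MvPolynomial.map_aeval]
        congr 2
        ext <;> simp
    _ = 0 := by rw [hpf, map_zero]

end LiesInHypersurface

end Hypersurface

section Ranges

lemma exists_finset_card_eq_rank_range_submatrix [Fintype n] (A : Matrix m n K) :
    ∃ s : Finset n, s.card = A.rank ∧
      LinearMap.range (A.submatrix id ((↑) : s → n)).mulVecLin = LinearMap.range A.mulVecLin := by
  classical
  obtain ⟨κ, a, ha, hspan, hli⟩ := exists_linearIndependent' K A.col
  have : Fintype κ := Fintype.ofInjective a ha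
  have hcols : Set.range (A.submatrix id ((↑) : Finset.univ.image a → n)).col =
      Set.range (A.col ∘ a) := by
    ext v
    simp [funext_iff]
  refine ⟨Finset.univ.image a, ?_, ?_⟩
  · rw [rank_eq_finrank_span_cols, ← hspan, finrank_span_eq_card hli,
      Finset.card_image_of_injective _ ha, Finset.card_univ]
  · rw [range_mulVecLin, range_mulVecLin, hcols, hspan]

lemma liesInHypersurface_iUnion_range_mulVec [Fintype σ] [Fintype m] [Fintype n] {k : ℕ}
    (A : Matrix m n (MvPolynomial σ K)) (hA : ∀ x, (A.map (MvPolynomial.eval x)).rank ≤ k)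
    (hcard : k + Fintype.card σ < Fintype.card m) :
    LiesInHypersurface (⋃ x, Set.range (A.map (MvPolynomial.eval x)).mulVec) := by
  let columnCombination (s : Finset n) (i : m) : MvPolynomial (σ ⊕ s) K :=
    ∑ j : s, MvPolynomial.rename Sum.inl (A i j) * MvPolynomial.X (Sum.inr j)
  have eval_columnCombination (s : Finset n) (x : σ → K) (y : s → K) (i : m) :
      MvPolynomial.eval (Sum.elim x y) (columnCombination s i) =
        ((A.map (MvPolynomial.eval x)).submatrix id ((↑) : s → n) *ᵥ y) i := by
    simp [columnCombination, mulVec, dotProduct, MvPolynomial.eval_rename]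
  have hcover (s : {s : Finset n // s.card ≤ k}) :
      LiesInHypersurface (Set.range fun z i => MvPolynomial.eval z (columnCombination s i)) := by
    refine .range_eval ?_ _
    rw [Fintype.card_sum, Fintype.card_coe]
    have := s.2
    omega
  refine (LiesInHypersurface.iUnion hcover).mono (Set.iUnion_subset fun x => ?_)
  rintro v ⟨w, rfl⟩
  obtain ⟨s, hs, hrange⟩ :=
    exists_finset_card_eq_rank_range_submatrix (A.map (MvPolynomial.eval x))
  obtain ⟨y, hy⟩ := hrange.ge ⟨w, rfl⟩
  exact Set.mem_iUnion.2 ⟨⟨s, hs.trans_le (hA x)⟩, Sum.elim x y, funext fun i =>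
    (eval_columnCombination s x y i).trans (congrFun hy i)⟩

/-- The generic matrix of the affine chart `cᵢ = 1` of the family `∑ⱼ cⱼ bⱼ`: its entries are
polynomials in the remaining parameters `cⱼ`, `j ≠ i`. -/
noncomputable def affineChart [Fintype ι] [DecidableEq ι] (b : ι → Matrix m n K) (i : ι) :
    Matrix m n (MvPolynomial {j // j ≠ i} K) :=
  of fun s t => MvPolynomial.C (b i s t) +
    ∑ j : {j // j ≠ i}, MvPolynomial.X j * MvPolynomial.C (b j s t)

lemma affineChart_map_eval [Fintype ι] [DecidableEq ι] (b : ι → Matrix m n K) (i : ι)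
    (x : {j // j ≠ i} → K) :
    (affineChart b i).map (MvPolynomial.eval x) = b i + ∑ j, x j • b j := by
  ext a c
  simp [affineChart, Matrix.sum_apply]

lemma smul_affineChart_map_eval [Fintype ι] [DecidableEq ι] (b : ι → Matrix m n K) {i : ι}
    {c : ι → K} (hi : c i ≠ 0) :
    c i • (affineChart b i).map (MvPolynomial.eval fun j : {j // j ≠ i} => c j / c i) =
      ∑ j, c j • b j := by
  rw [affineChart_map_eval, smul_add, Finset.smul_sum, Fintype.sum_eq_add_sum_subtype_ne _ i]
  simp_rw [smul_smul, mul_div_cancel₀ _ hi]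

lemma liesInHypersurface_iUnion_mem_range_mulVec [Fintype m] [Fintype n] {k d : ℕ}
    (M : Submodule K (Matrix m n K)) (hdim : Module.finrank K M ≤ d + 1)
    (hrank : ∀ A ∈ M, A.rank ≤ k) (hcard : k + d < Fintype.card m) :
    LiesInHypersurface (⋃ A ∈ M, Set.range A.mulVec) := by
  have : Nonempty m := Fintype.card_pos_iff.1 (by omega)
  let b := Module.finBasis K M
  let chart := affineChart fun j => (b j : Matrix m n K)
  have hchart (i) : LiesInHypersurface
      (⋃ x, Set.range ((chart i).map (MvPolynomial.eval x)).mulVec) := by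
    refine liesInHypersurface_iUnion_range_mulVec (k := k) _ (fun x => hrank _ ?_) ?_
    · rw [affineChart_map_eval]
      exact M.add_mem (b i).2 (M.sum_mem fun j _ => M.smul_mem _ (b j).2)
    · have : Fintype.card {j // j ≠ i} = Module.finrank K M - 1 := by simp
      omega
  refine ((LiesInHypersurface.iUnion hchart).union .singleton_zero).mono ?_
  refine Set.iUnion₂_subset fun A hA => ?_
  rintro _ ⟨w, rfl⟩
  by_cases hA0 : A = 0
  · exact Or.inr (by rw [hA0, zero_mulVec]; rfl)
  · have hsum : ∑ j, b.repr ⟨A, hA⟩ j • (b j : Matrix m n K) = A := by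
      simpa only [M.coe_sum, M.coe_smul] using congrArg Subtype.val (b.sum_repr ⟨A, hA⟩)
    obtain ⟨i, -, hi⟩ := Finset.exists_ne_zero_of_sum_ne_zero (hsum.trans_ne hA0)
    have hscale := smul_affineChart_map_eval (fun j => (b j : Matrix m n K))
      (left_ne_zero_of_smul hi)
    rw [← hsum, ← hscale, smul_mulVec, ← mulVec_smul]
    exact Or.inl (Set.mem_iUnion.2 ⟨i, Set.mem_iUnion.2 ⟨_, _, rfl⟩⟩)

end Ranges

section RankPreservation

lemma eq_zero_of_rank_eq_zero [Fintype n] {A : Matrix m n K} (hA : A.rank = 0) : A = 0 := by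
  classical
  rw [rank, Submodule.finrank_eq_zero, LinearMap.range_eq_bot, ← toLin'_apply'] at hA
  exact toLin'.map_eq_zero_iff.1 hA

lemma rank_mul_eq_right_of_disjoint [Fintype m] [Fintype n] (Q : Matrix l m K) (B : Matrix m n K)
    (h : Disjoint (LinearMap.range B.mulVecLin) (LinearMap.ker Q.mulVecLin)) :
    (Q * B).rank = B.rank := by
  rw [rank, mulVecLin_mul, LinearMap.range_comp, ← LinearMap.range_domRestrict]
  exact LinearMap.finrank_range_of_inj (LinearMap.injective_domRestrict_iff.2 h)

lemma rank_mul_mul_transpose_eq_of_disjoint [Fintype l] [Fintype m] (Q : Matrix l m K)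
    (A : Matrix m m K)
    (h : Disjoint (LinearMap.range A.mulVecLin) (LinearMap.ker Q.mulVecLin))
    (h' : Disjoint (LinearMap.range Aᵀ.mulVecLin) (LinearMap.ker Q.mulVecLin)) :
    (Q * A * Qᵀ).rank = A.rank := by
  have hle : LinearMap.range (A * Qᵀ).mulVecLin ≤ LinearMap.range A.mulVecLin := by
    rw [mulVecLin_mul]
    exact LinearMap.range_comp_le_range _ _
  calc (Q * A * Qᵀ).rank = (A * Qᵀ).rank := by
        rw [Matrix.mul_assoc, rank_mul_eq_right_of_disjoint Q _ (h.mono_left hle)]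
    _ = (Q * Aᵀ).rank := by rw [← rank_transpose, transpose_mul, transpose_transpose]
    _ = Aᵀ.rank := rank_mul_eq_right_of_disjoint Q _ h'
    _ = A.rank := rank_transpose A

lemma exists_surjective_ker_mulVecLin_eq [Fintype l] [Fintype m] (W : Submodule K (m → K))
    (hW : Fintype.card l + Module.finrank K W = Fintype.card m) :
    ∃ Q : Matrix l m K, Function.Surjective Q.mulVecLin ∧ LinearMap.ker Q.mulVecLin = W := by
  classical
  have hquot : Module.finrank K ((m → K) ⧸ W) = Module.finrank K (l → K) := by
    have := W.finrank_quotient_add_finrank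
    simp only [Module.finrank_fintype_fun_eq_card] at this ⊢
    omega
  let e := LinearEquiv.ofFinrankEq _ _ hquot
  refine ⟨LinearMap.toMatrix' (e.toLinearMap ∘ₗ W.mkQ), ?_⟩
  rw [← toLin'_apply', toLin'_toMatrix']
  exact ⟨e.surjective.comp W.mkQ_surjective, by rw [LinearEquiv.ker_comp, W.ker_mkQ]⟩

end RankPreservation

section Projection

/-- The linear map `A ↦ P A Pᵀ`, under which a space of `m × m` matrices is projected to a space of
`l × l` matrices. -/
def congruence [Fintype m] (P : Matrix l m K) : Matrix m m K →ₗ[K] Matrix l l K :=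
  mulRightLinearMap l K Pᵀ ∘ₗ mulLeftLinearMap m K P

variable [Infinite K] {k d n : ℕ}

lemma exists_rank_preserving_projection_succ (hn : k + d < n + 1)
    (M : Submodule K (Matrix (Fin (n + 1)) (Fin (n + 1)) K))
    (hdim : Module.finrank K M ≤ d + 1) (hrank : ∀ A ∈ M, A.rank ≤ k) :
    ∃ Q : Matrix (Fin n) (Fin (n + 1)) K, Function.Surjective Q.mulVecLin ∧
      ∀ A ∈ M, (Q * A * Qᵀ).rank = A.rank := by
  let Mt := M.map (transposeLinearEquiv (Fin (n + 1)) (Fin (n + 1)) K K).toLinearMap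
  have hMt : ∀ A ∈ Mt, A.rank ≤ k := by
    rintro _ ⟨A, hA, rfl⟩
    exact (rank_transpose A).trans_le (hrank A hA)
  have hcard : k + d < Fintype.card (Fin (n + 1)) := by rwa [Fintype.card_fin]
  obtain ⟨v, hv⟩ := ((liesInHypersurface_iUnion_mem_range_mulVec M hdim hrank hcard).union
    (liesInHypersurface_iUnion_mem_range_mulVec Mt ((Submodule.finrank_map_le _ M).trans hdim)
      hMt hcard)).exists_notMem
  simp only [Set.mem_union, Set.mem_iUnion₂, not_or, not_exists] at hv
  have hv0 : v ≠ 0 := fun h => hv.1 0 M.zero_mem ⟨0, by rw [h, mulVec_zero]⟩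
  obtain ⟨Q, hQ, hker⟩ := exists_surjective_ker_mulVecLin_eq (l := Fin n) (K ∙ v)
    (by simp only [Fintype.card_fin, finrank_span_singleton hv0])
  have disjoint_ker {A : Matrix (Fin (n + 1)) (Fin (n + 1)) K} (hA : v ∉ Set.range A.mulVec) :
      Disjoint (LinearMap.range A.mulVecLin) (LinearMap.ker Q.mulVecLin) :=
    hker ▸ Submodule.disjoint_span_singleton_of_notMem hA
  exact ⟨Q, hQ, fun A hA => rank_mul_mul_transpose_eq_of_disjoint Q A
    (disjoint_ker (hv.1 A hA)) (disjoint_ker (hv.2 Aᵀ (M.mem_map_of_mem hA)))⟩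

lemma exists_rank_preserving_projection (hn : k + d ≤ n)
    (M : Submodule K (Matrix (Fin n) (Fin n) K)) (hdim : Module.finrank K M ≤ d + 1)
    (hrank : ∀ A ∈ M, A.rank ≤ k) :
    ∃ P : Matrix (Fin (k + d)) (Fin n) K, Function.Surjective P.mulVecLin ∧
      ∀ A ∈ M, (P * A * Pᵀ).rank = A.rank := by
  induction n, hn using Nat.le_induction with
  | base => exact ⟨1, fun x => ⟨x, by simp⟩, fun A _ => by simp⟩
  | succ n hn ih =>
    obtain ⟨Q, hQ, hQrank⟩ :=
      exists_rank_preserving_projection_succ (Nat.lt_succ_of_le hn) M hdim hrank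
    have hrank' : ∀ B ∈ M.map (congruence Q), B.rank ≤ k := by
      rintro _ ⟨A, hA, rfl⟩
      exact (hQrank A hA).trans_le (hrank A hA)
    obtain ⟨P, hP, hPrank⟩ :=
      ih (M.map (congruence Q)) ((Submodule.finrank_map_le _ M).trans hdim) hrank'
    refine ⟨P * Q, ?_, fun A hA => ?_⟩
    · rw [mulVecLin_mul]
      exact hP.comp hQ
    · calc (P * Q * A * (P * Q)ᵀ).rank = (P * (Q * A * Qᵀ) * Pᵀ).rank := by
            simp only [transpose_mul, Matrix.mul_assoc]
        _ = (Q * A * Qᵀ).rank := hPrank _ (M.mem_map_of_mem hA)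
        _ = A.rank := hQrank A hA

end Projection

theorem stmt_11_general {K : Type*} [Field K] [Infinite K] {k d n : ℕ} (hn : k + d ≤ n)
    (M : Submodule K (Matrix (Fin n) (Fin n) K)) (hdim : Module.finrank K M ≤ d + 1)
    (hrank : ∀ A ∈ M, A.rank ≤ k) :
    ∃ P : Matrix (Fin (k + d)) (Fin n) K, P.rank = k + d ∧
      (∀ A ∈ M, (P * A * Pᵀ).rank = A.rank) ∧
      Set.InjOn (fun A : Matrix (Fin n) (Fin n) K => P * A * Pᵀ) M := by
  obtain ⟨P, hP, hPrank⟩ := exists_rank_preserving_projection hn M hdim hrank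
  refine ⟨P, ?_, hPrank, fun A hA B hB hAB => ?_⟩
  · rw [rank, LinearMap.range_eq_top.2 hP, finrank_top, Module.finrank_fin_fun]
  · have hzero : P * (A - B) * Pᵀ = 0 := by
      rw [Matrix.mul_sub, Matrix.sub_mul, sub_eq_zero]
      exact hAB
    have hrank_sub := hPrank (A - B) (M.sub_mem hA hB)
    rw [hzero, rank_zero, eq_comm] at hrank_sub
    exact sub_eq_zero.1 (eq_zero_of_rank_eq_zero hrank_sub)

/-- A `(d+1)`-dimensional space of skew-symmetric `n×n` complex matrices
of constant rank `2r` (with `n ≥ 2r+d`) can be isomorphically projected to a space of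
skew-symmetric `(2r+d)×(2r+d)` matrices of constant rank `2r`. -/
theorem stmt_11 (r d n : ℕ) (hr : 1 ≤ r) (hn : 2*r + d ≤ n)
    (M : Submodule ℂ (Matrix (Fin n) (Fin n) ℂ))
    (hdim : Module.finrank ℂ M = d + 1)
    (hskew : ∀ A ∈ M, Aᵀ = -A)
    (hrank : ∀ A ∈ M, A ≠ 0 → A.rank = 2*r) :
    ∃ P : Matrix (Fin (2*r + d)) (Fin n) ℂ, P.rank = 2*r + d ∧
      (∀ A ∈ M, A ≠ 0 → (P * A * Pᵀ).rank = 2*r) ∧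
      (∀ A ∈ M, ∀ B ∈ M, P * A * Pᵀ = P * B * Pᵀ → A = B) := by
  have hrank_le : ∀ A ∈ M, A.rank ≤ 2 * r := fun A hA => by
    rcases eq_or_ne A 0 with rfl | hA0
    · simp
    · exact (hrank A hA hA0).le
  obtain ⟨P, hP, hPrank, hinj⟩ := stmt_11_general hn M hdim.le hrank_le
  exact ⟨P, hP, fun A hA hA0 => (hPrank A hA).trans (hrank A hA hA0),
    fun A hA B hB hAB => hinj hA hB hAB⟩
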